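/- Fix p ∈ (0,1) and a function f with f(n) = o(n). Let H_n be the disjoint union of the Erdős–Rényi random k-graph G^(k)(n - f(n), p) and a complete k-graph on f(n) vertices. Then for every μ > 0, with high probability H_n is (p,μ)-dense, its minimum vertex degree is C(f(n)-1, k-1), and H_n contains no Hamilton loose cycle (for n large, since the clique component is too small to be connected to the rest). -/

import Mathlib

/-- `e(X 0, …, X (k-1))`: the number of `k`-tuples from `X 0 × ⋯ × X (k-1)` forming an edge. -/
def tupleCount {V : Type*} [DecidableEq V] {k : ℕ} (H : Finset (Finset V))
    (X : Fin k → Finset V) : ℕ :=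
  ((Fintype.piFinset X).filter (fun x => Finset.image x Finset.univ ∈ H)).card

/-- `H` is `(p, μ)`-dense. -/
def IsDense {V : Type*} [Fintype V] [DecidableEq V] (k : ℕ) (H : Finset (Finset V))
    (p μ : ℝ) : Prop :=
  ∀ X : Fin k → Finset V,
    p * ∏ i, ((X i).card : ℝ) - μ * (Fintype.card V : ℝ) ^ k ≤ (tupleCount H X : ℝ)

/-- The `i`-th edge of a potential `l`-cycle in the cyclic vertex order `σ`. -/
def cycleEdge {V : Type*} [DecidableEq V] (k l n L : ℕ) (hn : 0 < n) (σ : Fin n ≃ V)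
    (i : Fin L) : Finset V :=
  Finset.image (fun j : Fin k => σ ⟨(i.val * (k - l) + j.val) % n, Nat.mod_lt _ hn⟩)
    Finset.univ

/-- `H` contains a Hamilton `l`-cycle. -/
def ContainsHamiltonCycle {V : Type*} [Fintype V] [DecidableEq V] (k l : ℕ)
    (H : Finset (Finset V)) : Prop :=
  ∃ (L : ℕ) (hL : 0 < L) (hn : 0 < Fintype.card V) (σ : Fin (Fintype.card V) ≃ V),
    Fintype.card V ∣ L * (k - l) ∧
    (∀ i : Fin L, (cycleEdge k l (Fintype.card V) L hn σ i).card = k) ∧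
    (∀ i : Fin L, (cycleEdge k l (Fintype.card V) L hn σ i ∩
      cycleEdge k l (Fintype.card V) L hn σ ⟨(i.val + 1) % L, Nat.mod_lt _ hL⟩).card = l) ∧
    (∀ x : V, ∃ i : Fin L, x ∈ cycleEdge k l (Fintype.card V) L hn σ i) ∧
    (∀ i : Fin L, cycleEdge k l (Fintype.card V) L hn σ i ∈ H)

/-- The pool of potential random edges: the `k`-subsets of the first `n - f` vertices. -/
def randomPool (n k f : ℕ) : Finset (Finset (Fin n)) :=
  (Finset.powersetCard k Finset.univ).filter (fun e => ∀ v ∈ e, v.val < n - f)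

/-- The probability weight of an outcome `ω` (a choice of which potential random edges
are present), each edge appearing independently with probability `p`. -/
noncomputable def outcomeWeight (n k f : ℕ) (p : ℝ)
    (ω : {e // e ∈ randomPool n k f} → Bool) : ℝ :=
  ∏ e : {e // e ∈ randomPool n k f}, if ω e then p else 1 - p

/-- The disjoint union of the random `k`-graph on the first `n - f` vertices determined by
`ω`, and the complete `k`-graph on the last `f` vertices. -/
def unionGraph (n k f : ℕ) (ω : {e // e ∈ randomPool n k f} → Bool) :
    Finset (Finset (Fin n)) :=
  ((randomPool n k f).attach.filter (fun e => ω e)).image Subtype.val ∪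
    (Finset.powersetCard k Finset.univ).filter (fun e => ∀ v ∈ e, n - f ≤ v.val)

/-- The probability of an event `A` in a finite weighted space. -/
noncomputable def prOf {Ω : Type*} [Fintype Ω] (w : Ω → ℝ) (A : Set Ω) : ℝ :=
  ∑ ω : Ω, A.indicator w ω


lemma myStar_card {V : Type*} [DecidableEq V] (S : Finset V) (v : V) (hv : v ∈ S) (k : ℕ) (hk : 1 ≤ k) :
    ((Finset.powersetCard k S).filter (fun e => v ∈ e)).card = Nat.choose (S.card - 1) (k - 1) := by
  rw [← Finset.card_erase_of_mem hv, ← Finset.card_powersetCard]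
  refine Finset.card_bij' (fun e _ => e.erase v) (fun e _ => insert v e) ?_ ?_ ?_ ?_
  · intro e he
    simp only [Finset.mem_filter, Finset.mem_powersetCard] at he ⊢
    exact ⟨Finset.erase_subset_erase _ he.1.1, by rw [Finset.card_erase_of_mem he.2, he.1.2]⟩
  · intro e he
    simp only [Finset.mem_filter, Finset.mem_powersetCard] at he ⊢
    have hve : v ∉ e := fun h => by simpa using he.1 h
    refine ⟨⟨?_, ?_⟩, by simp⟩
    · intro x hx
      rcases Finset.mem_insert.1 hx with h | h
      · exact h ▸ hv
      · exact Finset.mem_of_mem_erase (he.1 h)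
    · rw [Finset.card_insert_of_notMem hve, he.2]; omega
  · intro e he
    simp only [Finset.mem_filter] at he
    exact Finset.insert_erase he.2
  · intro e he
    simp only [Finset.mem_powersetCard] at he
    have hve : v ∉ e := fun h => by simpa using he.1 h
    exact Finset.erase_insert hve

/-- Product weight. -/
noncomputable def bw {ι : Type*} [Fintype ι] (p : ℝ) (ω : ι → Bool) : ℝ :=
  ∏ e, if ω e then p else 1 - p

lemma bw_expect {ι : Type*} [Fintype ι] [DecidableEq ι] (p : ℝ) (g : ι → Bool → ℝ) :
    ∑ ω : ι → Bool, bw p ω * ∏ e, g e (ω e) = ∏ e, (p * g e true + (1 - p) * g e false) := by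
  have h := Finset.prod_univ_sum (fun _ : ι => (Finset.univ : Finset Bool))
    (fun e b => (if b then p else 1 - p) * g e b)
  simp only [Fintype.piFinset_univ] at h
  simp only [bw, ← Finset.prod_mul_distrib]
  rw [← h]
  simp

lemma bw_sum {ι : Type*} [Fintype ι] [DecidableEq ι] (p : ℝ) :
    ∑ ω : ι → Bool, bw p ω = 1 := by
  have := bw_expect (ι := ι) p (fun _ _ => 1)
  simpa using this

lemma bw_nonneg {ι : Type*} [Fintype ι] (p : ℝ) (hp : 0 < p) (hp1 : p < 1) (ω : ι → Bool) :
    0 ≤ bw p ω := by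
  refine Finset.prod_nonneg fun e _ => ?_
  split_ifs <;> linarith

lemma exp_quad (x : ℝ) (hx : |x| ≤ 1) : Real.exp x ≤ 1 + x + x ^ 2 := by
  have := Real.abs_exp_sub_one_sub_id_le hx
  have := (abs_le.1 this).2
  linarith

lemma single_bound (p s : ℝ) (hp : 0 < p) (hp1 : p < 1) (hs : 0 ≤ s) (hs1 : s ≤ 1) :
    p * Real.exp (s * (p - 1)) + (1 - p) * Real.exp (s * p) ≤ Real.exp (s ^ 2) := by
  have h1 := exp_quad (s * (p - 1)) (by rw [abs_le]; constructor <;> nlinarith)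
  have h2 := exp_quad (s * p) (by rw [abs_le]; constructor <;> nlinarith)
  have h3 := Real.add_one_le_exp (s ^ 2)
  have h4 : p * Real.exp (s * (p - 1)) + (1 - p) * Real.exp (s * p) ≤
      p * (1 + s * (p - 1) + (s * (p - 1)) ^ 2) + (1 - p) * (1 + s * p + (s * p) ^ 2) := by
    have := mul_le_mul_of_nonneg_left h1 hp.le
    have := mul_le_mul_of_nonneg_left h2 (sub_pos.2 hp1).le
    linarith
  have h5 : p * (1 + s * (p - 1) + (s * (p - 1)) ^ 2) + (1 - p) * (1 + s * p + (s * p) ^ 2)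
      = 1 + s ^ 2 * (p * (1 - p)) := by ring
  have h6 : s ^ 2 * (p * (1 - p)) ≤ s ^ 2 * 1 :=
    mul_le_mul_of_nonneg_left (by nlinarith) (sq_nonneg s)
  linarith

lemma chern {ι : Type*} [Fintype ι] [DecidableEq ι] (p : ℝ) (hp : 0 < p) (hp1 : p < 1)
    (a : ι → ℝ) (M N δ : ℝ) (ha : ∀ e, 0 ≤ a e) (haM : ∀ e, a e ≤ M) (hM : 1 ≤ M)
    (hN : ∑ e, a e ≤ N) (hδ : 0 < δ) (hδ1 : δ ≤ 1) :
    prOf (bw p) {ω : ι → Bool | ∑ e, a e * (if ω e then 1 else 0) ≤ p * ∑ e, a e - δ * N} ≤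
      Real.exp (-(δ ^ 2 / (4 * M)) * N) := by
  set lam : ℝ := δ / (2 * M) with hlam
  have hM0 : 0 < M := by linarith
  have hlam0 : 0 < lam := by positivity
  have hlamM : lam * M = δ / 2 := by rw [hlam]; field_simp
  let g : ι → Bool → ℝ := fun e b => Real.exp (lam * a e * (p - if b then 1 else 0))
  have hg : ∀ ω : ι → Bool, ∏ e, g e (ω e) =
      Real.exp (lam * (p * ∑ e, a e - ∑ e, a e * (if ω e then 1 else 0))) := by
    intro ω
    simp only [g]
    rw [← Real.exp_sum]
    congr 1
    rw [Finset.mul_sum, ← Finset.sum_sub_distrib, Finset.mul_sum]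
    refine Finset.sum_congr rfl fun e _ => ?_
    ring
  have h1 : prOf (bw p) {ω : ι → Bool | ∑ e, a e * (if ω e then 1 else 0) ≤ p * ∑ e, a e - δ * N}
      ≤ ∑ ω : ι → Bool, Real.exp (-(lam * (δ * N))) * (bw p ω * ∏ e, g e (ω e)) := by
    unfold prOf
    refine Finset.sum_le_sum fun ω _ => ?_
    have hb := bw_nonneg p hp hp1 ω
    by_cases hω : ∑ e, a e * (if ω e then (1:ℝ) else 0) ≤ p * ∑ e, a e - δ * N
    · rw [Set.indicator_of_mem (by exact hω), hg, mul_left_comm, ← Real.exp_add]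
      apply le_mul_of_one_le_right hb
      apply Real.one_le_exp
      have : 0 ≤ lam * (p * ∑ e, a e - ∑ e, a e * (if ω e then (1:ℝ) else 0) - δ * N) :=
        mul_nonneg hlam0.le (by linarith)
      linarith
    · rw [Set.indicator_of_notMem (by exact hω)]
      have : 0 ≤ ∏ e, g e (ω e) := by rw [hg]; positivity
      positivity
  refine h1.trans ?_
  rw [← Finset.mul_sum, bw_expect]
  have h2 : ∏ e, (p * g e true + (1 - p) * g e false) ≤ ∏ e, Real.exp (lam ^ 2 * M * a e) := by
    refine Finset.prod_le_prod (fun e _ => ?_) (fun e _ => ?_)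
    · have : 0 < 1 - p := by linarith
      simp only [g]; positivity
    · have hs1 : lam * a e ≤ 1 := by
        have := mul_le_mul_of_nonneg_left (haM e) hlam0.le
        linarith
      have := single_bound p (lam * a e) hp hp1 (mul_nonneg hlam0.le (ha e)) hs1
      simp only [g, if_true, Bool.false_eq_true, if_false, sub_zero]
      refine this.trans (Real.exp_le_exp.2 ?_)
      have : a e * a e ≤ M * a e := mul_le_mul_of_nonneg_right (haM e) (ha e)
      have := mul_le_mul_of_nonneg_left this (sq_nonneg lam)
      linarith
  refine (mul_le_mul_of_nonneg_left h2 (Real.exp_pos _).le).trans ?_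
  rw [← Real.exp_sum, ← Real.exp_add, ← Finset.mul_sum]
  apply Real.exp_le_exp.2
  have h3 : lam ^ 2 * M * ∑ e, a e ≤ lam ^ 2 * M * N := mul_le_mul_of_nonneg_left hN (by positivity)
  have h4 : -(lam * (δ * N)) + lam ^ 2 * M * N = -(δ ^ 2 / (4 * M)) * N := by
    rw [hlam]; field_simp; ring
  linarith

lemma prOf_compl {ι : Type*} [Fintype ι] [DecidableEq ι] (p : ℝ) (A : Set (ι → Bool)) :
    prOf (bw p) A = 1 - prOf (bw p) Aᶜ := by
  have := bw_sum (ι := ι) p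
  unfold prOf
  rw [eq_sub_iff_add_eq, ← Finset.sum_add_distrib, ← this]
  refine Finset.sum_congr rfl fun ω _ => ?_
  have := congrFun (Set.indicator_self_add_compl A (bw p)) ω
  simpa using this

lemma prOf_nonneg {ι : Type*} [Fintype ι] [DecidableEq ι] (p : ℝ) (hp : 0 < p) (hp1 : p < 1)
    (A : Set (ι → Bool)) : 0 ≤ prOf (bw p) A :=
  Finset.sum_nonneg fun ω _ => Set.indicator_nonneg (fun ω _ => bw_nonneg p hp hp1 ω) ω

/-- Union bound. -/
lemma prOf_union {ι κ κ' : Type*} [Fintype ι] [DecidableEq ι] [Fintype κ] [Fintype κ'] (p : ℝ) (hp : 0 < p)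
    (hp1 : p < 1) (A : Set (ι → Bool)) (B : κ → Set (ι → Bool)) (C : κ' → Set (ι → Bool))
    (h : ∀ ω ∈ A, (∃ i, ω ∈ B i) ∨ (∃ i, ω ∈ C i)) :
    prOf (bw p) A ≤ ∑ i, prOf (bw p) (B i) + ∑ i, prOf (bw p) (C i) := by
  unfold prOf
  rw [Finset.sum_comm, Finset.sum_comm (s := (Finset.univ : Finset κ')), ← Finset.sum_add_distrib]
  refine Finset.sum_le_sum fun ω _ => ?_
  have hb := bw_nonneg p hp hp1 ω
  have n1 : ∀ i, 0 ≤ (B i).indicator (bw p) ω := fun i =>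
    Set.indicator_nonneg (fun ω _ => bw_nonneg p hp hp1 ω) ω
  have n2 : ∀ i, 0 ≤ (C i).indicator (bw p) ω := fun i =>
    Set.indicator_nonneg (fun ω _ => bw_nonneg p hp hp1 ω) ω
  have s1 := Finset.sum_nonneg (s := Finset.univ) (fun i _ => n1 i)
  have s2 := Finset.sum_nonneg (s := Finset.univ) (fun i _ => n2 i)
  by_cases hA : ω ∈ A
  · rw [Set.indicator_of_mem hA]
    rcases h ω hA with ⟨i, hi⟩ | ⟨i, hi⟩
    · have := Finset.single_le_sum (fun i _ => n1 i) (Finset.mem_univ i)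
      rw [Set.indicator_of_mem hi] at this
      linarith
    · have := Finset.single_le_sum (fun i _ => n2 i) (Finset.mem_univ i)
      rw [Set.indicator_of_mem hi] at this
      linarith
  · rw [Set.indicator_of_notMem hA]
    linarith

lemma mem_unionGraph {n k f : ℕ} {ω : {e // e ∈ randomPool n k f} → Bool} {e : Finset (Fin n)} :
    e ∈ unionGraph n k f ω ↔ (∃ h : e ∈ randomPool n k f, ω ⟨e, h⟩ = true) ∨
      (e.card = k ∧ ∀ v ∈ e, n - f ≤ v.val) := by
  simp [unionGraph]

lemma mem_randomPool {n k f : ℕ} {e : Finset (Fin n)} :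
    e ∈ randomPool n k f ↔ e.card = k ∧ ∀ v ∈ e, v.val < n - f := by
  simp [randomPool]

/-- No Hamilton loose cycle. -/
lemma no_ham (n k f : ℕ) (hk : 2 ≤ k) (hf : 1 ≤ f) (hfn : f < n)
    (ω : {e // e ∈ randomPool n k f} → Bool) :
    ¬ ContainsHamiltonCycle k 1 (unionGraph n k f ω) := by
  rintro ⟨L, hL, hn, σ, -, -, -, hcov, hmem⟩
  have hpart : ∀ i, (∀ v ∈ cycleEdge k 1 _ L hn σ i, v.val < n - f) ∨
      (∀ v ∈ cycleEdge k 1 _ L hn σ i, n - f ≤ v.val) := by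
    intro i
    rcases mem_unionGraph.1 (hmem i) with ⟨h, -⟩ | h
    · exact Or.inl (mem_randomPool.1 h).2
    · exact Or.inr h.2
  have hshare : ∀ (i : ℕ) (hi : i + 1 < L), ∃ v, v ∈ cycleEdge k 1 _ L hn σ ⟨i, by omega⟩ ∧
      v ∈ cycleEdge k 1 _ L hn σ ⟨i + 1, hi⟩ := by
    intro i hi
    refine ⟨σ ⟨((i + 1) * (k - 1)) % _, Nat.mod_lt _ hn⟩, ?_, ?_⟩
    · refine Finset.mem_image.2 ⟨⟨k - 1, by omega⟩, Finset.mem_univ _, ?_⟩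
      congr 2
      simp [Nat.add_mul]
    · refine Finset.mem_image.2 ⟨⟨0, by omega⟩, Finset.mem_univ _, ?_⟩
      congr 2
  obtain ⟨i0, hi0⟩ := hcov ⟨0, by omega⟩
  obtain ⟨i1, hi1⟩ := hcov ⟨n - 1, by omega⟩
  rcases hpart ⟨0, hL⟩ with h0 | h0
  · have : ∀ (i : ℕ) (hi : i < L), ∀ v ∈ cycleEdge k 1 _ L hn σ ⟨i, hi⟩, v.val < n - f := by
      intro i
      induction i with
      | zero => intro hi; exact h0
      | succ i ih =>
        intro hi
        obtain ⟨v, hv1, hv2⟩ := hshare i hi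
        rcases hpart ⟨i + 1, hi⟩ with h | h
        · exact h
        · have a1 := ih (by omega) v hv1
          have a2 := h v hv2
          omega
    have := this i1.1 i1.2 _ hi1
    simp only at this
    omega
  · have : ∀ (i : ℕ) (hi : i < L), ∀ v ∈ cycleEdge k 1 _ L hn σ ⟨i, hi⟩, n - f ≤ v.val := by
      intro i
      induction i with
      | zero => intro hi; exact h0
      | succ i ih =>
        intro hi
        obtain ⟨v, hv1, hv2⟩ := hshare i hi
        rcases hpart ⟨i + 1, hi⟩ with h | h
        · have a1 := ih (by omega) v hv1
          have a2 := h v hv2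
          omega
        · exact h
    have := this i0.1 i0.2 _ hi0
    simp only at this
    omega

/-- Degrees of the clique vertices. -/
lemma clique_deg (n k f : ℕ) (hk : 1 ≤ k) (hfn : f ≤ n)
    (ω : {e // e ∈ randomPool n k f} → Bool) (v : Fin n) (hv : n - f ≤ v.val) :
    ((unionGraph n k f ω).filter (fun e => v ∈ e)).card = Nat.choose (f - 1) (k - 1) := by
  have hS : (Finset.univ.filter (fun u : Fin n => n - f ≤ u.val)).card = f := by
    have := Fin.card_filter_val_lt (n := n) (m := n - f)
    have h2 := Finset.card_filter_add_card_filter_not (s := (Finset.univ : Finset (Fin n))) (fun u => u.val < n - f)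
    simp only [not_lt, Finset.card_univ, Fintype.card_fin] at h2
    omega
  have h := myStar_card (Finset.univ.filter (fun u : Fin n => n - f ≤ u.val)) v (by simpa using hv) k hk
  rw [hS] at h
  rw [← h]
  congr 1
  ext e
  simp only [Finset.mem_filter, mem_unionGraph, Finset.mem_powersetCard, Finset.subset_iff, Finset.mem_univ, true_and]
  constructor
  · rintro ⟨⟨h, -⟩ | h, hve⟩
    · have := (mem_randomPool.1 h).2 v hve
      omega
    · exact ⟨⟨fun x hx => h.2 x hx, h.1⟩, hve⟩
  · rintro ⟨⟨h1, h2⟩, hve⟩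
    exact ⟨Or.inr ⟨h2, h1⟩, hve⟩

/-- Number of potential edges at a random vertex. -/
lemma pool_deg (n k f : ℕ) (hk : 1 ≤ k) (v : Fin n) (hv : v.val < n - f) :
    ∑ e : {e // e ∈ randomPool n k f}, (if v ∈ e.1 then (1:ℝ) else 0) =
      (Nat.choose (n - f - 1) (k - 1) : ℝ) := by
  have hS : (Finset.univ.filter (fun u : Fin n => u.val < n - f)).card = n - f := by
    rw [Fin.card_filter_val_lt]; omega
  have h := myStar_card (Finset.univ.filter (fun u : Fin n => u.val < n - f)) v (by simpa using hv) k hk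
  rw [hS] at h
  rw [← h, Finset.sum_coe_sort (randomPool n k f) (fun e => if v ∈ e then (1:ℝ) else 0), Finset.sum_boole]
  congr 2
  ext e
  simp only [Finset.mem_filter, mem_randomPool, Finset.mem_powersetCard, Finset.subset_iff, Finset.mem_univ, true_and]
  tauto

lemma deg_ge (n k f : ℕ) (v : Fin n) (ω : {e // e ∈ randomPool n k f} → Bool) :
    ∑ e : {e // e ∈ randomPool n k f}, (if v ∈ e.1 then (1:ℝ) else 0) * (if ω e then 1 else 0) ≤
      (((unionGraph n k f ω).filter (fun e => v ∈ e)).card : ℝ) := by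
  have : ∑ e : {e // e ∈ randomPool n k f}, (if v ∈ e.1 then (1:ℝ) else 0) * (if ω e then 1 else 0)
     = ((Finset.univ.filter (fun e : {e // e ∈ randomPool n k f} => v ∈ e.1 ∧ ω e = true)).card : ℝ) := by
    rw [← Finset.sum_boole]
    refine Finset.sum_congr rfl fun e _ => ?_
    by_cases h1 : v ∈ e.1 <;> by_cases h2 : ω e = true <;> simp [h1, h2]
  rw [this]
  norm_cast
  refine Finset.card_le_card_of_injOn Subtype.val ?_ Subtype.val_injective.injOn
  intro e he
  simp only [Finset.coe_filter, Finset.mem_univ, true_and, Set.mem_ofPred_eq] at he ⊢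
  exact ⟨mem_unionGraph.2 (Or.inl ⟨e.2, he.2⟩), he.1⟩

/-- multiplicity of `e` in the product. -/
def mult {n k : ℕ} (X : Fin k → Finset (Fin n)) (e : Finset (Fin n)) : ℕ :=
  ((Fintype.piFinset X).filter (fun x => Finset.image x Finset.univ = e)).card

lemma mult_le {n k : ℕ} (X : Fin k → Finset (Fin n)) (e : Finset (Fin n)) (he : e.card = k) :
    mult X e ≤ k ^ k := by
  have : (Fintype.piFinset (fun _ : Fin k => e)).card = k ^ k := by
    rw [Fintype.card_piFinset]; simp [he]
  rw [← this]
  refine Finset.card_le_card fun x hx => ?_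
  simp only [Finset.mem_filter] at hx
  rw [Fintype.mem_piFinset]
  intro i
  rw [← hx.2]
  exact Finset.mem_image_of_mem _ (Finset.mem_univ i)

lemma sum_mult {n k : ℕ} (X : Fin k → Finset (Fin n)) (P : Finset (Finset (Fin n))) :
    ∑ e ∈ P, mult X e = ((Fintype.piFinset X).filter (fun x => Finset.image x Finset.univ ∈ P)).card := by
  rw [Finset.card_eq_sum_card_fiberwise (f := fun x => Finset.image x Finset.univ) (t := P)]
  · refine Finset.sum_congr rfl fun e he => ?_
    unfold mult
    congr 1
    ext x
    simp only [Finset.mem_filter]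
    constructor
    · rintro ⟨h1, h2⟩; exact ⟨⟨h1, h2 ▸ he⟩, h2⟩
    · rintro ⟨⟨h1, _⟩, h2⟩; exact ⟨h1, h2⟩
  · intro x hx
    simp only [Finset.coe_filter, Set.mem_ofPred_eq] at hx
    exact hx.2

lemma tuple_ge {n k f : ℕ} (X : Fin k → Finset (Fin n)) (ω : {e // e ∈ randomPool n k f} → Bool) :
    ∑ e : {e // e ∈ randomPool n k f}, (mult X e.1 : ℝ) * (if ω e then 1 else 0) ≤
      (tupleCount (unionGraph n k f ω) X : ℝ) := by
  have h1 : ∑ e : {e // e ∈ randomPool n k f}, (mult X e.1 : ℝ) * (if ω e then 1 else 0) =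
      ((∑ e ∈ ((randomPool n k f).attach.filter (fun e => ω e)).image Subtype.val, mult X e : ℕ) : ℝ) := by
    rw [Finset.sum_image (Subtype.val_injective.injOn), Finset.sum_filter]
    push_cast
    refine Finset.sum_congr rfl fun e _ => ?_
    split_ifs <;> simp
  rw [h1, sum_mult]
  norm_cast
  refine Finset.card_le_card fun x hx => ?_
  simp only [Finset.mem_filter] at hx ⊢
  exact ⟨hx.1, Finset.mem_union_left _ hx.2⟩

lemma card_restrict {n k : ℕ} (i : Fin k) : Fintype.card ({t : Fin k // t ≠ i} → Fin n) = n ^ (k - 1) := by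
  simp

lemma count_eq {n k : ℕ} (i j : Fin k) (hij : j ≠ i) :
    (Finset.univ.filter (fun x : Fin k → Fin n => x i = x j)).card ≤ n ^ (k - 1) := by
  rw [← card_restrict i, ← Finset.card_univ]
  refine Finset.card_le_card_of_injOn (fun x (t : {t : Fin k // t ≠ i}) => x t) (fun _ _ => by simp) ?_
  intro x hx y hy hxy
  simp only [Finset.coe_filter, Finset.mem_univ, true_and, Set.mem_ofPred_eq] at hx hy
  have h : ∀ t, t ≠ i → x t = y t := fun t ht => congrFun hxy ⟨t, ht⟩
  funext t
  by_cases ht : t = i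
  · subst ht; rw [hx, hy]; exact h j hij
  · exact h t ht

lemma count_mem {n k : ℕ} (i : Fin k) (F : Finset (Fin n)) :
    (Finset.univ.filter (fun x : Fin k → Fin n => x i ∈ F)).card ≤ F.card * n ^ (k - 1) := by
  rw [← card_restrict i, ← Finset.card_univ, ← Finset.card_product]
  refine Finset.card_le_card_of_injOn (fun x => (x i, fun (t : {t : Fin k // t ≠ i}) => x t)) (fun x hx => by simpa using hx) ?_
  intro x hx y hy hxy
  have h0 : x i = y i := congrArg Prod.fst hxy
  have h : ∀ t, t ≠ i → x t = y t := fun t ht => congrFun (congrArg Prod.snd hxy) ⟨t, ht⟩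
  funext t
  by_cases ht : t = i
  · subst ht; exact h0
  · exact h t ht

lemma sum_mult_ge {n k f : ℕ} (hfn : f ≤ n) (X : Fin k → Finset (Fin n)) :
    ∏ i, (X i).card ≤ (∑ e ∈ randomPool n k f, mult X e) + (k * k + k * f) * n ^ (k - 1) := by
  rw [sum_mult, ← Fintype.card_piFinset,
    ← Finset.card_filter_add_card_filter_not (s := Fintype.piFinset X) (fun x => Finset.image x Finset.univ ∈ randomPool n k f)]
  refine Nat.add_le_add_left ?_ _
  set F := Finset.univ.filter (fun u : Fin n => n - f ≤ u.val) with hF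
  have hS : F.card = f := by
    have := Fin.card_filter_val_lt (n := n) (m := n - f)
    have h2 := Finset.card_filter_add_card_filter_not (s := (Finset.univ : Finset (Fin n))) (fun u => u.val < n - f)
    simp only [not_lt, Finset.card_univ, Fintype.card_fin] at h2
    rw [hF]
    omega
  let U1 := (Finset.univ : Finset (Fin k × Fin k)).biUnion
    (fun q => if q.2 ≠ q.1 then Finset.univ.filter (fun x : Fin k → Fin n => x q.1 = x q.2) else ∅)
  let U2 := (Finset.univ : Finset (Fin k)).biUnion
    (fun i => Finset.univ.filter (fun x : Fin k → Fin n => x i ∈ F))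
  have h1 : U1.card ≤ k * k * n ^ (k - 1) := by
    have := Finset.card_biUnion_le_card_mul (Finset.univ : Finset (Fin k × Fin k))
      (fun q => if q.2 ≠ q.1 then Finset.univ.filter (fun x : Fin k → Fin n => x q.1 = x q.2) else ∅) (n ^ (k - 1)) (by
        intro q _
        split_ifs with h
        · exact count_eq _ _ h
        · simp)
    refine this.trans ?_
    simp
  have h2 : U2.card ≤ k * f * n ^ (k - 1) := by
    have := Finset.card_biUnion_le_card_mul (Finset.univ : Finset (Fin k))
      (fun i => Finset.univ.filter (fun x : Fin k → Fin n => x i ∈ F)) (f * n ^ (k - 1)) (by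
        intro q _
        have := count_mem q F
        rwa [hS] at this)
    rw [mul_assoc]
    refine this.trans ?_
    simp
  have h3 : (Fintype.piFinset X).filter (fun x => ¬ Finset.image x Finset.univ ∈ randomPool n k f) ⊆ U1 ∪ U2 := by
    intro x hx
    have hx := (Finset.mem_filter.1 hx).2
    by_contra hcon
    apply hx
    simp only [Finset.mem_union, not_or, U1, U2, Finset.mem_biUnion, Finset.mem_univ, true_and, not_exists,
      Finset.mem_filter, hF] at hcon
    rw [mem_randomPool]
    constructor
    · rw [Finset.card_image_of_injective]
      · simp
      · intro i j hij
        by_contra hne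
        have := hcon.1 (i, j)
        rw [if_pos (by exact fun h => hne h.symm)] at this
        simp at this
        exact this hij
    · intro v hv
      obtain ⟨i, -, rfl⟩ := Finset.mem_image.1 hv
      have := hcon.2 i
      omega
  have := (Finset.card_le_card h3).trans (Finset.card_union_le _ _)
  rw [add_mul]
  omega

lemma sum_mult_le {n k : ℕ} (X : Fin k → Finset (Fin n)) (P : Finset (Finset (Fin n))) :
    ∑ e ∈ P, mult X e ≤ n ^ k := by
  rw [sum_mult]
  refine (Finset.card_le_univ _).trans ?_
  simp

lemma dense_prob (n k f : ℕ) (p : ℝ) (hp : 0 < p) (hp1 : p < 1) (δ : ℝ) (hk : 2 ≤ k)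
    (hδ : 0 < δ) (hδ1 : δ ≤ 1) (X : Fin k → Finset (Fin n)) :
    prOf (bw p) {ω : {e // e ∈ randomPool n k f} → Bool |
      ∑ e, (mult X e.1 : ℝ) * (if ω e then 1 else 0) ≤
        p * ∑ e : {e // e ∈ randomPool n k f}, (mult X e.1 : ℝ) - δ * (n : ℝ) ^ k} ≤
      Real.exp (-(δ ^ 2 / (4 * (k : ℝ) ^ k)) * (n : ℝ) ^ k) := by
  refine chern p hp hp1 (fun e : {e // e ∈ randomPool n k f} => (mult X e.1 : ℝ)) _ _ δ
    (fun e => by positivity) (fun e => ?_) ?_ ?_ hδ hδ1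
  · exact_mod_cast mult_le X e.1 (mem_randomPool.1 e.2).1
  · exact one_le_pow₀ (by exact_mod_cast (by omega : 1 ≤ k))
  · rw [Finset.sum_coe_sort (randomPool n k f) (fun e => (mult X e : ℝ))]
    exact_mod_cast sum_mult_le X _

lemma deg_prob (n k f : ℕ) (p : ℝ) (hp : 0 < p) (hp1 : p < 1) (hk : 2 ≤ k)
    (v : Fin n) (hv : v.val < n - f) :
    prOf (bw p) {ω : {e // e ∈ randomPool n k f} → Bool |
      ∑ e : {e // e ∈ randomPool n k f}, (if v ∈ e.1 then (1:ℝ) else 0) * (if ω e then 1 else 0) ≤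
        p * ∑ e : {e // e ∈ randomPool n k f}, (if v ∈ e.1 then (1:ℝ) else 0)
          - p / 2 * (Nat.choose (n - f - 1) (k - 1) : ℝ)} ≤
      Real.exp (-((p / 2) ^ 2 / (4 * 1)) * (Nat.choose (n - f - 1) (k - 1) : ℝ)) := by
  refine chern p hp hp1 (fun e : {e // e ∈ randomPool n k f} => (if v ∈ e.1 then (1:ℝ) else 0)) 1 _ (p / 2)
    (fun e => ?_) (fun e => ?_) le_rfl ?_ (by linarith) (by linarith)
  · split_ifs <;> norm_num
  · split_ifs <;> norm_num
  · rw [pool_deg n k f (by omega) v hv]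

lemma choose_facts (n k f : ℕ) (p : ℝ) (hp : 0 < p) (hp1 : p < 1) (hk : 2 ≤ k) (hn : 2 ≤ n)
    (hf : (f : ℝ) ≤ p / 8 * n) (hkn : (k : ℝ) ≤ n / 8) :
    (n : ℝ) / (2 * ((k - 1).factorial : ℝ)) ≤ (Nat.choose (n - f - 1) (k - 1) : ℝ) ∧
    (Nat.choose (f - 1) (k - 1) : ℝ) ≤ p / 2 * (Nat.choose (n - f - 1) (k - 1) : ℝ) := by
  have hn0 : (2 : ℝ) ≤ n := by exact_mod_cast hn
  have hf' : (f : ℝ) ≤ n / 8 := by nlinarith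
  have hsum : f + k + 1 ≤ n := by
    have : (f : ℝ) + k + 1 ≤ n := by linarith
    exact_mod_cast this
  have hb : (n : ℝ) / 2 ≤ ((n - f - 1 + 1 - (k - 1) : ℕ) : ℝ) := by
    have : (n - f - 1 + 1 - (k - 1) : ℕ) + (f + k) = n + 1 := by omega
    have : ((n - f - 1 + 1 - (k - 1) : ℕ) : ℝ) + (f + k) = n + 1 := by exact_mod_cast this
    linarith
  have hD : ((n : ℝ) / 2) ^ (k - 1) / ((k - 1).factorial : ℝ) ≤ (Nat.choose (n - f - 1) (k - 1) : ℝ) := by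
    refine le_trans ?_ (Nat.pow_le_choose (k - 1) (n - f - 1))
    gcongr
  have hk1 : k - 1 ≠ 0 := by omega
  constructor
  · refine le_trans ?_ hD
    rw [← div_div]
    gcongr
    exact le_self_pow₀ (by linarith) hk1
  · have h1 := Nat.choose_le_pow_div (α := ℝ) (k - 1) (f - 1)
    refine h1.trans ?_
    have h2 : (((f - 1 : ℕ) : ℝ)) ≤ p / 2 * (n / 2) := by
      have : ((f - 1 : ℕ) : ℝ) ≤ f := by exact_mod_cast Nat.sub_le _ _
      have : 0 < p * n := by positivity
      linarith
    have h3 : (((f - 1 : ℕ) : ℝ)) ^ (k - 1) ≤ p / 2 * (n / 2) ^ (k - 1) := by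
      calc (((f - 1 : ℕ) : ℝ)) ^ (k - 1) ≤ (p / 2 * (n / 2)) ^ (k - 1) := by gcongr
        _ = (p / 2) ^ (k - 1) * (n / 2) ^ (k - 1) := mul_pow _ _ _
        _ ≤ _ := by
          gcongr
          exact pow_le_of_le_one (by linarith) (by linarith) hk1
    calc (((f - 1 : ℕ) : ℝ)) ^ (k - 1) / ((k - 1).factorial : ℝ)
        ≤ p / 2 * (n / 2) ^ (k - 1) / ((k - 1).factorial : ℝ) := by gcongr
      _ = p / 2 * ((n / 2) ^ (k - 1) / ((k - 1).factorial : ℝ)) := by ring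
      _ ≤ _ := by gcongr

lemma main_bound (n k f : ℕ) (p : ℝ) (hp : 0 < p) (hp1 : p < 1) (hk : 2 ≤ k) (hn : 2 ≤ n)
    (hf1 : 1 ≤ f) (μ δ : ℝ) (hδ : 0 < δ) (hδ1 : δ ≤ 1) (hδμ : δ ≤ μ / 2)
    (hf : (f : ℝ) ≤ p / 8 * n) (hkn : (k : ℝ) ≤ n / 8)
    (hμn : (k : ℝ) * k + k * f ≤ μ / 2 * n)
    (hbig : (k : ℝ) + 1 ≤ δ ^ 2 / (4 * (k : ℝ) ^ k) * n) :
    1 - (Real.exp (-1) ^ n + (n : ℝ) ^ 1 * Real.exp (-((p / 2) ^ 2 / (4 * 1) / (2 * ((k - 1).factorial : ℝ)))) ^ n) ≤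
    prOf (outcomeWeight n k f p)
        {ω | IsDense k (unionGraph n k f ω) p μ ∧
          (∀ v : Fin n, Nat.choose (f - 1) (k - 1) ≤
            ((unionGraph n k f ω).filter (fun e => v ∈ e)).card) ∧
          (∃ v : Fin n, ((unionGraph n k f ω).filter (fun e => v ∈ e)).card =
            Nat.choose (f - 1) (k - 1)) ∧
          ¬ ContainsHamiltonCycle k 1 (unionGraph n k f ω)} := by
  obtain ⟨hD, hdeg⟩ := choose_facts n k f p hp hp1 hk hn hf hkn
  have hn0 : (2 : ℝ) ≤ n := by exact_mod_cast hn
  have hfn : f < n := by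
    have : (f : ℝ) < n := by nlinarith
    exact_mod_cast this
  change _ ≤ prOf (bw p) _
  rw [prOf_compl]
  refine sub_le_sub_left ?_ 1
  refine (prOf_union (κ := Fin k → Finset (Fin n)) (κ' := {v : Fin n // v.val < n - f}) p hp hp1 _
    (fun X => {ω : {e // e ∈ randomPool n k f} → Bool |
      ∑ e, (mult X e.1 : ℝ) * (if ω e then 1 else 0) ≤
        p * ∑ e : {e // e ∈ randomPool n k f}, (mult X e.1 : ℝ) - δ * (n : ℝ) ^ k})
    (fun v => {ω : {e // e ∈ randomPool n k f} → Bool |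
      ∑ e : {e // e ∈ randomPool n k f}, (if v.1 ∈ e.1 then (1:ℝ) else 0) * (if ω e then 1 else 0) ≤
        p * ∑ e : {e // e ∈ randomPool n k f}, (if v.1 ∈ e.1 then (1:ℝ) else 0)
          - p / 2 * (Nat.choose (n - f - 1) (k - 1) : ℝ)}) ?_).trans ?_
  · intro ω hω
    by_contra hcon
    rw [not_or] at hcon
    obtain ⟨hc1, hc2⟩ := hcon
    rw [not_exists] at hc1 hc2
    apply hω
    refine ⟨?_, ?_, ⟨⟨n - 1, by omega⟩, clique_deg n k f (by omega) hfn.le ω _ (by simp only; omega)⟩,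
      no_ham n k f hk hf1 hfn ω⟩
    · intro X
      have h1 := lt_of_not_ge (Set.notMem_ofPred_iff.1 (hc1 X))
      refine le_trans ?_ (h1.le.trans (tuple_ge X ω))
      rw [Finset.sum_coe_sort (randomPool n k f) (fun e => (mult X e : ℝ))]
      have h2 : (∏ i, ((X i).card : ℝ)) ≤ (∑ e ∈ randomPool n k f, (mult X e : ℝ)) +
          ((k : ℝ) * k + k * f) * (n : ℝ) ^ (k - 1) := by
        exact_mod_cast sum_mult_ge (f := f) hfn.le X
      have h3 : ((k : ℝ) * k + k * f) * (n : ℝ) ^ (k - 1) ≤ μ / 2 * (n : ℝ) ^ k := by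
        calc _ ≤ μ / 2 * n * (n : ℝ) ^ (k - 1) := by gcongr
          _ = μ / 2 * (n : ℝ) ^ k := by
            rw [mul_assoc, ← pow_succ', Nat.sub_add_cancel (by omega)]
      have h4 : p * (((k : ℝ) * k + k * f) * (n : ℝ) ^ (k - 1)) ≤
          1 * (((k : ℝ) * k + k * f) * (n : ℝ) ^ (k - 1)) := by gcongr
      have h5 := mul_le_mul_of_nonneg_left h2 hp.le
      have h6 : δ * (n : ℝ) ^ k ≤ μ / 2 * (n : ℝ) ^ k := by gcongr
      rw [Fintype.card_fin]
      linarith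
    · intro v
      by_cases hv : v.val < n - f
      · have h1 := lt_of_not_ge (Set.notMem_ofPred_iff.1 (hc2 ⟨v, hv⟩))
        rw [pool_deg n k f (by omega) v hv] at h1
        have h2 := h1.le.trans (deg_ge n k f v ω)
        have : (Nat.choose (f - 1) (k - 1) : ℝ) ≤
            (((unionGraph n k f ω).filter (fun e => v ∈ e)).card : ℝ) := by linarith
        exact_mod_cast this
      · exact (clique_deg n k f (by omega) hfn.le ω v (by omega)).ge
  · refine add_le_add ?_ ?_
    · refine (Finset.sum_le_sum fun X _ => dense_prob n k f p hp hp1 δ hk hδ hδ1 X).trans ?_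
      rw [Finset.sum_const, Finset.card_univ]
      simp only [Fintype.card_pi, Fintype.card_finset, Fintype.card_fin, Finset.prod_const,
        Finset.card_univ, nsmul_eq_mul]
      push_cast
      have h2 : (2 : ℝ) ≤ Real.exp 1 := by have := Real.add_one_le_exp (1:ℝ); linarith
      have h3 : ((2 : ℝ) ^ n) ^ k ≤ Real.exp (n * k) := by
        calc ((2 : ℝ) ^ n) ^ k ≤ ((Real.exp 1) ^ n) ^ k := by gcongr
          _ = _ := by rw [← pow_mul, ← Real.exp_nat_mul]; simp
      refine (mul_le_mul_of_nonneg_right h3 (Real.exp_pos _).le).trans ?_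
      rw [← Real.exp_add, ← Real.exp_nat_mul]
      apply Real.exp_le_exp.2
      have h4 : (n : ℝ) * n ≤ (n : ℝ) ^ k := by
        rw [← pow_two]
        exact pow_le_pow_right₀ (by linarith) hk
      have h5 := mul_le_mul_of_nonneg_left h4 (show 0 ≤ δ ^ 2 / (4 * (k : ℝ) ^ k) by positivity)
      have h6 := mul_le_mul_of_nonneg_right hbig (show (0:ℝ) ≤ n by positivity)
      linarith
    · refine (Finset.sum_le_sum fun v _ => deg_prob n k f p hp hp1 hk v.1 v.2).trans ?_
      rw [Finset.sum_const, Finset.card_univ, nsmul_eq_mul, pow_one, ← Real.exp_nat_mul]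
      have hc : Fintype.card {v : Fin n // v.val < n - f} ≤ n := by
        have := Fintype.card_subtype_le (fun v : Fin n => v.val < n - f)
        simpa using this
      have hc' : (Fintype.card {v : Fin n // v.val < n - f} : ℝ) ≤ n := by exact_mod_cast hc
      refine mul_le_mul hc' (Real.exp_le_exp.2 ?_) (Real.exp_pos _).le (by positivity)
      have := mul_le_mul_of_nonneg_left hD (show 0 ≤ (p / 2) ^ 2 / (4 * 1) by positivity)
      have e : (p / 2) ^ 2 / (4 * 1) * ((n : ℝ) / (2 * ((k - 1).factorial : ℝ))) =
        n * ((p / 2) ^ 2 / (4 * 1) / (2 * ((k - 1).factorial : ℝ))) := by ring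
      linarith

/-- Fix `k ≥ 2`, `p ∈ (0,1)` and `f` with `1 ≤ f n` and `f n = o(n)`.
Let `H n` be the disjoint union of the random `k`-graph `G^(k)(n - f n, p)` and a complete
`k`-graph on `f n` vertices.  Then for every `μ > 0`, with high probability (probability
tending to `1` as `n → ∞`): `H n` is `(p, μ)`-dense, its minimum vertex degree is
`C(f n - 1, k - 1)`, and `H n` contains no Hamilton loose (1-)cycle. -/
theorem stmt_9 (k : ℕ) (hk : 2 ≤ k) (p : ℝ) (hp : 0 < p) (hp1 : p < 1)
    (f : ℕ → ℕ) (hf1 : ∀ n, 1 ≤ f n)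
    (hf : Filter.Tendsto (fun n => (f n : ℝ) / (n : ℝ)) Filter.atTop (nhds 0))
    (μ : ℝ) (hμ : 0 < μ) :
    Filter.Tendsto
      (fun n => prOf (outcomeWeight n k (f n) p)
        {ω | IsDense k (unionGraph n k (f n) ω) p μ ∧
          (∀ v : Fin n, Nat.choose (f n - 1) (k - 1) ≤
            ((unionGraph n k (f n) ω).filter (fun e => v ∈ e)).card) ∧
          (∃ v : Fin n, ((unionGraph n k (f n) ω).filter (fun e => v ∈ e)).card =
            Nat.choose (f n - 1) (k - 1)) ∧
          ¬ ContainsHamiltonCycle k 1 (unionGraph n k (f n) ω)})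
      Filter.atTop (nhds 1) := by
  have hδ : 0 < min (μ / 2) 1 := lt_min (by linarith) one_pos
  set δ := min (μ / 2) 1 with hδdef
  have hδ1 : δ ≤ 1 := min_le_right _ _
  have hδμ : δ ≤ μ / 2 := min_le_left _ _
  have hk0 : (0 : ℝ) < k := by exact_mod_cast (by omega : 0 < k)
  have hcast := tendsto_natCast_atTop_atTop (R := ℝ)
  have e1 := hf.eventually (gt_mem_nhds (show (0:ℝ) < p / 8 by linarith))
  have e2 := hf.eventually (gt_mem_nhds (show (0:ℝ) < μ / (4 * k) by positivity))
  have e3 := hcast.eventually_ge_atTop (8 * (k : ℝ))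
  have e4 := hcast.eventually_ge_atTop ((k : ℝ) * k / (μ / 4))
  have hc : 0 < δ ^ 2 / (4 * (k : ℝ) ^ k) := by positivity
  have e5 := hcast.eventually_ge_atTop (((k : ℝ) + 1) / (δ ^ 2 / (4 * (k : ℝ) ^ k)))
  have hlow : Filter.Tendsto (fun n : ℕ => 1 - (Real.exp (-1) ^ n + (n : ℝ) ^ 1 *
      Real.exp (-((p / 2) ^ 2 / (4 * 1) / (2 * ((k - 1).factorial : ℝ)))) ^ n))
      Filter.atTop (nhds 1) := by
    have t1 : Filter.Tendsto (fun n : ℕ => Real.exp (-1) ^ n) Filter.atTop (nhds 0) :=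
      tendsto_pow_atTop_nhds_zero_of_lt_one (Real.exp_pos _).le (Real.exp_lt_one_iff.2 (by norm_num))
    have t2 := tendsto_pow_const_mul_const_pow_of_abs_lt_one 1
      (r := Real.exp (-((p / 2) ^ 2 / (4 * 1) / (2 * ((k - 1).factorial : ℝ))))) (by
        rw [abs_of_pos (Real.exp_pos _)]
        apply Real.exp_lt_one_iff.2
        rw [neg_lt_zero]
        positivity)
    have := (t1.add t2).const_sub 1
    simpa using this
  refine tendsto_of_tendsto_of_tendsto_of_le_of_le' hlow tendsto_const_nhds ?_ ?_
  · filter_upwards [e1, e2, e3, e4, e5, Filter.eventually_ge_atTop 2] with n h1 h2 h3 h4 h5 hn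
    have hn0 : (0 : ℝ) < n := by exact_mod_cast (by omega : 0 < n)
    rw [div_lt_iff₀ hn0] at h1 h2
    rw [div_le_iff₀ (by positivity)] at h4 h5
    refine main_bound n k (f n) p hp hp1 hk hn (hf1 n) μ δ hδ hδ1 hδμ h1.le (by linarith) ?_ (by linarith)
    have := mul_le_mul_of_nonneg_left h2.le hk0.le
    have e : (k : ℝ) * (μ / (4 * k) * n) = μ / 4 * n := by field_simp
    linarith
  · refine Filter.Eventually.of_forall fun n => ?_
    change prOf (bw p) _ ≤ 1
    rw [prOf_compl]
    have := prOf_nonneg (ι := {e // e ∈ randomPool n k (f n)}) p hp hp1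
    linarith [this ({ω | IsDense k (unionGraph n k (f n) ω) p μ ∧
          (∀ v : Fin n, Nat.choose (f n - 1) (k - 1) ≤
            ((unionGraph n k (f n) ω).filter (fun e => v ∈ e)).card) ∧
          (∃ v : Fin n, ((unionGraph n k (f n) ω).filter (fun e => v ∈ e)).card =
            Nat.choose (f n - 1) (k - 1)) ∧
          ¬ ContainsHamiltonCycle k 1 (unionGraph n k (f n) ω)}ᶜ)]
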